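/- Let M be a non-zero squarefree integer and S the smooth cubic surface over Q_p given by x^3 + y^3 + z(z^2 + M w^2) = 0, where p ≠ 3 is a prime dividing M. Let C_p be the plane cubic curve x^3 + y^3 + z^3 = 0 over F_p and O̅ = (1:−1:0) ∈ C_p(F_p). Define φ: S(Q_p) → C_p(F_p) as follows: write P ∈ S(Q_p) with coprime coordinates (x:y:z:w) in Z_p; if the reduction of P modulo p is not the vertex (0:0:0:1), set φ(P) = (x̄:ȳ:z̄); if the reduction is the vertex, set φ(P) = O̅. Let ψ: S(Q_p) → Pic^0(C_p) be ψ(P) = [φ(P) − O̅]. Then ψ induces a well-defined surjective group homomorphism H_S(Q_p) → Pic^0(C_p)/2Pic^0(C_p) sending [P] to ψ(P) mod 2Pic^0(C_p). -/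

import Mathlib

/- Common framework: points, lines, intersection divisors, the secant-tangent span,
the groups `H_S(K)`, geometric notions over the algebraic closure, and topologies. -/

open MvPolynomial

noncomputable section

namespace CubicSurf

variable {K L : Type*} [Field K] [Field L] {n : ℕ}

/-- The set of `K`-rational points of the projective hypersurface `F = 0`. -/
def zeroSet (F : MvPolynomial (Fin n) K) : Set (Projectivization K (Fin n → K)) :=
  {P | eval P.rep F = 0}

/-- The binary form obtained by restricting `F` to the line spanned by `u` and `v`,
via the parametrization `(s : t) ↦ s • u + t • v`. -/
def lineRestrict (F : MvPolynomial (Fin n) K) (u v : Fin n → K) : MvPolynomial (Fin 2) K :=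
  aeval (fun i => C (u i) * X 0 + C (v i) * X 1) F

/-- A projective line: a 2-dimensional linear subspace of `K^n`. -/
def IsLine (W : Submodule K (Fin n → K)) : Prop := Module.finrank K W = 2

/-- The line `W` lies (geometrically) on the hypersurface `F = 0`. -/
def LineOnSurf (F : MvPolynomial (Fin n) K) (W : Submodule K (Fin n → K)) : Prop :=
  ∀ u v : Fin n → K, u ∈ W → v ∈ W → lineRestrict F u v = 0

/-- The projective point `P` lies on the line `W`. -/
def OnLine (W : Submodule K (Fin n → K)) (P : Projectivization K (Fin n → K)) : Prop :=
  P.rep ∈ W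

/-- The set of `K`-points of the line `W`. -/
def linePts (W : Submodule K (Fin n → K)) : Set (Projectivization K (Fin n → K)) :=
  {P | OnLine W P}

/-- `ℓ · S = P + Q + R`: the intersection divisor (with multiplicities) of the line `W`
with the hypersurface `F = 0` is `P + Q + R`. -/
def MeetsIn (F : MvPolynomial (Fin n) K) (W : Submodule K (Fin n → K))
    (P Q R : Projectivization K (Fin n → K)) : Prop :=
  ∃ (u v : Fin n → K) (_ : u ∈ W) (_ : v ∈ W) (_ : LinearIndependent K ![u, v])
    (c : K) (l m : Fin 3 → K) (h : ∀ k, l k • u + m k • v ≠ 0),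
      c ≠ 0 ∧
      lineRestrict F u v = C c * ∏ k : Fin 3, (C (m k) * X 0 - C (l k) * X 1) ∧
      Projectivization.mk K _ (h 0) = P ∧
      Projectivization.mk K _ (h 1) = Q ∧
      Projectivization.mk K _ (h 2) = R

/-- Membership in the span of a set of points under the secant/tangent process:
the smallest subset of `S(K)` containing `B` such that whenever `P`, `Q` are in it and a
`K`-line `ℓ ⊄ S` satisfies `ℓ·S = P+Q+R` with `R ∈ S(K)`, then `R` is in it. -/
inductive SpanMem (F : MvPolynomial (Fin n) K) (B : Set (Projectivization K (Fin n → K))) :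
    Projectivization K (Fin n → K) → Prop
  | base (P : Projectivization K (Fin n → K)) (hP : P ∈ B) : SpanMem F B P
  | secant (P Q R : Projectivization K (Fin n → K)) (W : Submodule K (Fin n → K))
      (hW : IsLine W) (hWS : ¬ LineOnSurf F W) (hP : SpanMem F B P) (hQ : SpanMem F B Q)
      (hR : R ∈ zeroSet F) (hm : MeetsIn F W P Q R) : SpanMem F B R

/-- The span of a set of points under the secant/tangent process. -/
def Span (F : MvPolynomial (Fin n) K) (B : Set (Projectivization K (Fin n → K))) :
    Set (Projectivization K (Fin n → K)) :=
  {P | SpanMem F B P}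

/-- Smoothness of the projective hypersurface `F = 0`: over the algebraic closure there is
no nonzero common zero of `F` and all of its partial derivatives. -/
def IsSmoothHypersurf (F : MvPolynomial (Fin n) K) : Prop :=
  ∀ v : Fin n → AlgebraicClosure K,
    eval v (MvPolynomial.map (algebraMap K (AlgebraicClosure K)) F) = 0 →
    (∀ i, eval v (pderiv i (MvPolynomial.map (algebraMap K (AlgebraicClosure K)) F)) = 0) →
    v = 0

/-- A smooth cubic hypersurface. -/
def SmoothCubic (F : MvPolynomial (Fin n) K) : Prop :=
  F.IsHomogeneous 3 ∧ IsSmoothHypersurf F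

/-- The linear form cutting out the tangent plane `Π_P` of `F = 0` at `P`,
evaluated at the representative of a point `Q`; `Q ∈ Π_P` iff this vanishes. -/
def tangentEval (F : MvPolynomial (Fin n) K) (P Q : Projectivization K (Fin n → K)) : K :=
  ∑ i, eval P.rep (pderiv i F) * Q.rep i

/-- The set of `K`-points of the tangent plane `Π_P`. -/
def tangentPlanePts (F : MvPolynomial (Fin n) K) (P : Projectivization K (Fin n → K)) :
    Set (Projectivization K (Fin n → K)) :=
  {Q | tangentEval F P Q = 0}

/-- The set of `K`-points of `Γ_P = S ∩ Π_P`. -/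
def GammaPts (F : MvPolynomial (Fin n) K) (P : Projectivization K (Fin n → K)) :
    Set (Projectivization K (Fin n → K)) :=
  zeroSet F ∩ tangentPlanePts F P

/-! ### Base change along a field embedding -/

/-- Base change of a vector along a field embedding. -/
def clVec (φ : K →+* L) (v : Fin n → K) : Fin n → L := fun i => φ (v i)

lemma clVec_ne_zero (φ : K →+* L) {v : Fin n → K} (hv : v ≠ 0) : clVec φ v ≠ 0 := by
  intro h
  apply hv
  funext i
  have := congrFun h i
  simpa [clVec] using φ.injective (by simpa [clVec] using this)

/-- Base change of a projective point along a field embedding. -/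
def clPt (φ : K →+* L) (P : Projectivization K (Fin n → K)) :
    Projectivization L (Fin n → L) :=
  Projectivization.mk L (clVec φ P.rep) (clVec_ne_zero φ P.rep_nonzero)

lemma eval_smul_of_isHomogeneous {R : Type*} [CommSemiring R] {F : MvPolynomial (Fin n) R}
    {d : ℕ} (hF : F.IsHomogeneous d) (a : R) (w : Fin n → R) :
    eval (a • w) F = a ^ d * eval w F := by
  classical
  rw [eval_eq', eval_eq', Finset.mul_sum]
  refine Finset.sum_congr rfl fun s hs => ?_
  have hdeg : ∑ i, s i = d := by
    have h1 := hF (MvPolynomial.mem_support_iff.mp hs)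
    rw [Finsupp.weight_apply] at h1
    rw [← h1, Finsupp.sum_fintype]
    · simp
    · intro i; simp
  have key : ∀ i : Fin n, (a • w) i ^ s i = a ^ s i * w i ^ s i := by
    intro i; simp [mul_pow]
  rw [Finset.prod_congr rfl (fun i _ => key i), Finset.prod_mul_distrib,
    Finset.prod_pow_eq_pow_sum, hdeg]
  ring

lemma clVec_eval (φ : K →+* L) (F : MvPolynomial (Fin n) K) (v : Fin n → K) :
    eval (clVec φ v) (MvPolynomial.map φ F) = φ (eval v F) := by
  rw [eval_map]
  have h : φ (eval v F) = φ (eval₂Hom (RingHom.id K) v F) := rfl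
  rw [h, map_eval₂Hom]
  rfl

/-- A point given by a vector on which a homogeneous `F` vanishes lies in the zero set. -/
lemma mk_mem_zeroSet {F : MvPolynomial (Fin n) K} {d : ℕ} (hF : F.IsHomogeneous d)
    {v : Fin n → K} (hv : v ≠ 0) (h : eval v F = 0) :
    Projectivization.mk K v hv ∈ zeroSet F := by
  obtain ⟨a, ha⟩ := Projectivization.exists_smul_eq_mk_rep K v hv
  show eval (Projectivization.mk K v hv).rep F = 0
  have hrep : (Projectivization.mk K v hv).rep = (a : K) • v := by
    rw [← ha, Units.smul_def]
  rw [hrep, eval_smul_of_isHomogeneous hF, h, mul_zero]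

lemma clPt_mem_zeroSet (φ : K →+* L) {F : MvPolynomial (Fin n) K} {d : ℕ}
    (hF : F.IsHomogeneous d) {P : Projectivization K (Fin n → K)} (hP : P ∈ zeroSet F) :
    clPt φ P ∈ zeroSet (MvPolynomial.map φ F) := by
  apply mk_mem_zeroSet (hF.map φ)
  rw [clVec_eval, hP, map_zero]

/-- The induced map on points of `S` under base change of the field. -/
def ptMap (φ : K →+* L) {F : MvPolynomial (Fin n) K} {d : ℕ} (hF : F.IsHomogeneous d)
    (P : zeroSet F) : zeroSet (MvPolynomial.map φ F) :=
  ⟨clPt φ P.1, clPt_mem_zeroSet φ hF P.2⟩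

/-- A subspace of `L^n` is defined over `K` (w.r.t. `φ : K →+* L`) if it is spanned by
the base change of a `K`-subspace. -/
def DefinedOver (φ : K →+* L) (W : Submodule L (Fin n → L)) : Prop :=
  ∃ W₀ : Submodule K (Fin n → K), W = Submodule.span L (clVec φ '' (W₀ : Set (Fin n → K)))

/-! ### Asymptotic lines, parabolic points, Eckardt points -/

/-- The line `W` is asymptotic to `F = 0` at `P`: the intersection multiplicity
`(ℓ · S)_P` is at least 3. -/
def AsymptoticAt (F : MvPolynomial (Fin n) K) (W : Submodule K (Fin n → K))
    (P : Projectivization K (Fin n → K)) : Prop :=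
  IsLine W ∧ P.rep ∈ W ∧
    ∃ v ∈ W, LinearIndependent K ![P.rep, v] ∧
      ∃ c : K, lineRestrict F P.rep v = C c * (X 1) ^ 3

/-- The set of asymptotic lines at `P`. -/
def AsymSet (F : MvPolynomial (Fin n) K) (P : Projectivization K (Fin n → K)) :
    Set (Submodule K (Fin n → K)) :=
  {W | AsymptoticAt F W P}

/-- A point of a hypersurface is parabolic (relative to the given field) if it does
not have exactly two distinct asymptotic lines (i.e. it has one or infinitely many). -/
def ParabolicAt (F : MvPolynomial (Fin n) K) (P : Projectivization K (Fin n → K)) : Prop :=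
  ¬ ∃ W₁ W₂ : Submodule K (Fin n → K), W₁ ≠ W₂ ∧ AsymSet F P = {W₁, W₂}

/-- An Eckardt point (relative to the given field): three distinct lines lying on the
surface pass through `P`. -/
def EckardtAt (F : MvPolynomial (Fin n) K) (P : Projectivization K (Fin n → K)) : Prop :=
  ∃ W₁ W₂ W₃ : Submodule K (Fin n → K), W₁ ≠ W₂ ∧ W₁ ≠ W₃ ∧ W₂ ≠ W₃ ∧
    (∀ W ∈ ({W₁, W₂, W₃} : Set (Submodule K (Fin n → K))),
      IsLine W ∧ LineOnSurf F W ∧ OnLine W P)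

section geometric

variable (F : MvPolynomial (Fin n) K)

/-- `F` base changed to the algebraic closure of `K`. -/
def clF : MvPolynomial (Fin n) (AlgebraicClosure K) :=
  MvPolynomial.map (algebraMap K (AlgebraicClosure K)) F

/-- A `K`-point of `S` is parabolic (a geometric notion, checked over `K̄`). -/
def IsParabolic (P : Projectivization K (Fin n → K)) : Prop :=
  ParabolicAt (clF F) (clPt (algebraMap K (AlgebraicClosure K)) P)

/-- A `K`-point of `S` is an Eckardt point (a geometric notion, checked over `K̄`). -/
def IsEckardt (P : Projectivization K (Fin n → K)) : Prop :=
  EckardtAt (clF F) (clPt (algebraMap K (AlgebraicClosure K)) P)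

/-- A `K`-point of `S` is `K`-hyperbolic: it has exactly two asymptotic lines over `K̄`,
and both are defined over `K`. -/
def IsHyperbolic (P : Projectivization K (Fin n → K)) : Prop :=
  ∃ W₁ W₂, W₁ ≠ W₂ ∧
    AsymSet (clF F) (clPt (algebraMap K (AlgebraicClosure K)) P) = {W₁, W₂} ∧
    DefinedOver (algebraMap K (AlgebraicClosure K)) W₁ ∧
    DefinedOver (algebraMap K (AlgebraicClosure K)) W₂

/-- A `K`-point of `S` is `K`-ternary: at least one of the asymptotic lines of `S`
through `P` is defined over `K`. -/
def IsTernary (P : Projectivization K (Fin n → K)) : Prop :=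
  ∃ W ∈ AsymSet (clF F) (clPt (algebraMap K (AlgebraicClosure K)) P),
    DefinedOver (algebraMap K (AlgebraicClosure K)) W

end geometric

/-! ### The group `H_S(K)` -/

variable (F : MvPolynomial (Fin n) K)

/-- `G_S(K)`: the free abelian group on the set `S(K)`. -/
abbrev GS := FreeAbelianGroup (zeroSet F)

/-- The degree homomorphism `G_S(K) → ℤ`, `Σ aᵢ Pᵢ ↦ Σ aᵢ`. -/
def degHom : GS F →+ ℤ := FreeAbelianGroup.lift fun _ => (1 : ℤ)

/-- `P + Q + R` is a "three point sum": either cut out on `S` with multiplicity by a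
`K`-line not contained in `S`, or `P`, `Q`, `R` all lie on a `K`-line contained in `S`. -/
def TripleRel (P Q R : zeroSet F) : Prop :=
  ∃ W : Submodule K (Fin n → K), IsLine W ∧
    ((¬ LineOnSurf F W ∧ MeetsIn F W P.1 Q.1 R.1) ∨
      (LineOnSurf F W ∧ OnLine W P.1 ∧ OnLine W Q.1 ∧ OnLine W R.1))

/-- `G'_S(K)`: the subgroup generated by all three point sums. -/
def Gp : AddSubgroup (GS F) :=
  AddSubgroup.closure {x | ∃ P Q R : zeroSet F, TripleRel F P Q R ∧
    x = FreeAbelianGroup.of P + FreeAbelianGroup.of Q + FreeAbelianGroup.of R}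

/-- `G''_S(K)`: the degree-0 part of `G'_S(K)`. -/
def Gpp : AddSubgroup (GS F) := Gp F ⊓ (degHom F).ker

/-- `H_S(K) = G_S(K)/G''_S(K)`. -/
abbrev HS := GS F ⧸ Gpp F

/-- The class `[P] ∈ H_S(K)` of a point `P ∈ S(K)`. -/
def HClass (P : zeroSet F) : HS F := QuotientAddGroup.mk' (Gpp F) (FreeAbelianGroup.of P)

/-- The degree homomorphism `H_S(K) → ℤ`. -/
def HdegHom : HS F →+ ℤ :=
  QuotientAddGroup.lift (Gpp F) (degHom F) (fun _ hx => hx.2)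

/-- `H⁰_S(K)`: the degree-0 part of `H_S(K)`. -/
def H0 : AddSubgroup (HS F) := (HdegHom F).ker

@[simp] lemma HdegHom_HClass (P : zeroSet F) : HdegHom F (HClass F P) = 1 := by
  simp [HdegHom, HClass, degHom]

/-- The class `[P] - [Q]`, as an element of `H⁰_S(K)`. -/
def H0diff (P Q : zeroSet F) : H0 F :=
  ⟨HClass F P - HClass F Q, by simp [H0, AddMonoidHom.mem_ker, map_sub]⟩

/-! ### mod-`p` dimensions and torsion -/

/-- `A/pA` for an abelian group `A`. -/
abbrev ModP (p : ℕ) (A : Type*) [AddCommGroup A] : Type _ :=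
  A ⧸ (AddMonoidHom.range (nsmulAddMonoidHom p : A →+ A))

instance ModP.instModule (p : ℕ) (A : Type*) [AddCommGroup A] : Module (ZMod p) (ModP p A) :=
  QuotientAddGroup.zmodModule (fun x => ⟨x, rfl⟩)

/-- `dim_{F_p} A/pA`. -/
def dimModP (p : ℕ) (A : Type*) [AddCommGroup A] : Cardinal := Module.rank (ZMod p) (ModP p A)

/-- The `k`-torsion subgroup `A[k]` of an abelian group `A`. -/
def torsion (k : ℕ) (A : Type*) [AddCommGroup A] : AddSubgroup A :=
  (nsmulAddMonoidHom k : A →+ A).ker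

instance torsion.instModule (k : ℕ) (A : Type*) [AddCommGroup A] :
    Module (ZMod k) (torsion k A) :=
  AddCommGroup.zmodModule (fun x => Subtype.ext x.2)

/-- `dim_{F_k} A[k]`: the dimension of the `k`-torsion subgroup (for `k` prime). -/
def dimTorsion (k : ℕ) (A : Type*) [AddCommGroup A] : Cardinal :=
  Module.rank (ZMod k) (torsion k A)

/-! ### Topologies -/

/-- The quotient topology on projective space induced by the topology of `K`. -/
def projTop (K : Type*) [Field K] [TopologicalSpace K] (n : ℕ) :
    TopologicalSpace (Projectivization K (Fin n → K)) :=
  TopologicalSpace.coinduced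
    (fun v : {v : Fin n → K // v ≠ 0} => Projectivization.mk K v.1 v.2) inferInstance

/-- The induced topology on the set of `K`-points of `S`. -/
def surfTop (F : MvPolynomial (Fin n) K) [TopologicalSpace K] :
    TopologicalSpace (zeroSet F) :=
  TopologicalSpace.induced Subtype.val (projTop K n)

/-- `K` (a topological field) is a local field: it is isomorphic, as a topological field,
to `ℝ`, to `ℂ`, or to a finite extension of `ℚ_p` for some prime `p` (with its canonical
topology, namely the `ℚ_p`-vector space topology). -/
def IsLocalField (K : Type*) [Field K] [TopologicalSpace K] : Prop :=
  (∃ e : K ≃+* ℝ, IsHomeomorph e) ∨ (∃ e : K ≃+* ℂ, IsHomeomorph e) ∨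
    (∃ (p : ℕ), p.Prime ∧ ∃ (_ : Fact p.Prime) (f : ℚ_[p] →+* K) (m : ℕ)
      (e : K ≃+ (Fin m → ℚ_[p])),
      (∀ (c : ℚ_[p]) (x : K), e (f c * x) = c • e x) ∧ IsHomeomorph e)

end CubicSurf

namespace CubicSurf

open MvPolynomial

variable (p : ℕ) [Fact p.Prime]

/-- The plane cubic curve `C_p : x³ + y³ + z³ = 0` over `F_p`. -/
def Gcubic : MvPolynomial (Fin 3) (ZMod p) := X 0 ^ 3 + X 1 ^ 3 + X 2 ^ 3

lemma Gcubic_hom : (Gcubic p).IsHomogeneous 3 := by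
  have h : ∀ i : Fin 3, ((X i : MvPolynomial (Fin 3) (ZMod p)) ^ 3).IsHomogeneous 3 :=
    fun i => by simpa using (isHomogeneous_X _ i).pow 3
  exact ((h 0).add (h 1)).add (h 2)

lemma O_ne_zero : (![1, -1, 0] : Fin 3 → ZMod p) ≠ 0 := by
  intro h
  have h0 := congrFun h 0
  simp at h0

lemma O_eval : eval (![1, -1, 0] : Fin 3 → ZMod p) (Gcubic p) = 0 := by
  simp [Gcubic]
  ring

/-- The flex `O = (1 : -1 : 0)` on `C_p`. -/
def OPt : zeroSet (Gcubic p) :=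
  ⟨Projectivization.mk (ZMod p) ![1, -1, 0] (O_ne_zero p),
    mk_mem_zeroSet (Gcubic_hom p) (O_ne_zero p) (O_eval p)⟩

/-- `Pic⁰(C_p)`, realized as the degree-0 part of the group of formal sums of points of
`C_p(F_p)` modulo degree-0 combinations of collinearity relations. -/
abbrev Pic0C : AddSubgroup (HS (Gcubic p)) := H0 (Gcubic p)

/-- The reduction of the first three coordinates of a primitive vector `v ∈ ℤ_p⁴`. -/
def redVec (v : Fin 4 → ℤ_[p]) : Fin 3 → ZMod p :=
  fun i => PadicInt.toZMod (v i.castSucc)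

/-- `φ : S(ℚ_p) → C_p(F_p)` as specified: writing `P` with coprime coordinates
`(x:y:z:w)` in `ℤ_p`, if the reduction of `P` mod `p` is not the vertex `(0:0:0:1)`
then `φ(P) = (x̄:ȳ:z̄)`, and otherwise `φ(P) = O`. -/
def PhiSpec (F : MvPolynomial (Fin 4) ℚ_[p])
    (φ : zeroSet F → zeroSet (Gcubic p)) : Prop :=
  ∀ (P : zeroSet F) (v : Fin 4 → ℤ_[p]) (hv : (fun i => (v i : ℚ_[p])) ≠ 0),
    Projectivization.mk ℚ_[p] (fun i => (v i : ℚ_[p])) hv = P.1 →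
    (∃ i, IsUnit (v i)) →
    ((∀ h : redVec p v ≠ 0,
        (φ P).1 = Projectivization.mk (ZMod p) (redVec p v) h) ∧
      (redVec p v = 0 → (φ P).1 = (OPt p).1))

end CubicSurf

/-!
A line meeting `S` in three `ℚ_p`-points has a basis over `ℤ_p` in echelon form, obtained by
dividing by its Plücker coordinate of largest valuation. By Gauss's lemma the equation of `S`
restricts to this line as `c ∏ (m_k s - l_k t)` with `c` integral and each `(l_k : m_k)` primitive,
so it can be reduced modulo `p`. (Lines on `S` are the case `c = 0`.)

If the reduced line misses the vertex, it projects from the vertex to a line that cuts out the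
points `φ(P_k)` on `C_p`, hence their classes sum to `0`. Otherwise it projects to a single point
`T`, and `φ(P_k)` is `T` when `l_k` is a unit and `O` when it is not. If no `l_k` is a unit the sum
is `0`. If `T` has `z = 0`, it is a flex, so `3 [T - O] = 0` and `[T - O]` is trivial modulo `2`.
In the remaining case the coefficients of `t³` and `s t²` modulo `M²` show that exactly two of the
`l_k` are units, and the sum is `2 [T - O]`.

Surjectivity holds because every point of `C_p` lifts to a point of `S` with `w = 0`, by Hensel's
lemma.
-/

namespace CubicSurf

open scoped LinearAlgebra.Projectivization

section LineForm

variable {R R' : Type*} [CommRing R] [CommRing R'] {n : ℕ}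

/-- The binary form `F (s • u + t • v)`: `lineRestrict` over an arbitrary commutative ring, so that
it can be used for integral models and their reductions. -/
def lineForm (F : MvPolynomial (Fin n) R) (u v : Fin n → R) : MvPolynomial (Fin 2) R :=
  aeval (fun i => C (u i) * X 0 + C (v i) * X 1) F

/-- The product of the linear forms in `(s, t)` vanishing at the points `(l k : m k)`. -/
def lineFactors (l m : Fin 3 → R) : MvPolynomial (Fin 2) R :=
  ∏ k, (C (m k) * X 0 - C (l k) * X 1)

lemma lineForm_eq_lineRestrict {K : Type*} [Field K] (F : MvPolynomial (Fin n) K)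
    (u v : Fin n → K) : lineForm F u v = lineRestrict F u v := rfl

lemma comp_smul_add_smul (f : R →+* R') (s t : R) (u v : Fin n → R) :
    f ∘ (s • u + t • v) = f s • (f ∘ u) + f t • (f ∘ v) := by
  ext
  simp

lemma map_lineForm (f : R →+* R') (F : MvPolynomial (Fin n) R) (u v : Fin n → R) :
    MvPolynomial.map f (lineForm F u v) = lineForm (MvPolynomial.map f F) (f ∘ u) (f ∘ v) := by
  induction F using MvPolynomial.induction_on with
  | C a => simp [lineForm, algebraMap_eq]
  | add F G hF hG =>
    simp only [lineForm, map_add] at hF hG ⊢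
    rw [hF, hG]
  | mul_X F i hF =>
    simp only [lineForm, map_mul, map_add, map_X, map_C, aeval_X, Function.comp_apply] at hF ⊢
    rw [hF]

lemma lineForm_rename {k : ℕ} (g : Fin k → Fin n) (F : MvPolynomial (Fin k) R)
    (u v : Fin n → R) : lineForm (rename g F) u v = lineForm F (u ∘ g) (v ∘ g) :=
  aeval_rename g _ F

lemma lineForm_linearCombination (F : MvPolynomial (Fin n) R) (u v : Fin n → R) (α β γ δ : R) :
    lineForm F (α • u + β • v) (γ • u + δ • v) =
      aeval ![C α * X 0 + C γ * X 1, C β * X 0 + C δ * X 1] (lineForm F u v) := by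
  unfold lineForm
  rw [← AlgHom.comp_apply, comp_aeval]
  congr 2
  funext i
  simp only [map_add, map_mul, algHom_C, aeval_X, Matrix.cons_val_zero, Matrix.cons_val_one,
    Pi.add_apply, Pi.smul_apply, smul_eq_mul, algebraMap_eq]
  ring

lemma eval_lineForm (F : MvPolynomial (Fin n) R) (u v : Fin n → R) (x : Fin 2 → R) :
    eval x (lineForm F u v) = eval (x 0 • u + x 1 • v) F := by
  induction F using MvPolynomial.induction_on with
  | C a => simp [lineForm, algebraMap_eq]
  | add F G hF hG =>
    simp only [lineForm, map_add] at hF hG ⊢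
    rw [hF, hG]
  | mul_X F i hF =>
    simp only [lineForm, map_mul, map_add, eval_C, eval_X, aeval_X, Pi.add_apply, Pi.smul_apply,
      smul_eq_mul] at hF ⊢
    rw [hF]
    ring

lemma map_lineFactors (f : R →+* R') (l m : Fin 3 → R) :
    MvPolynomial.map f (lineFactors l m) = lineFactors (f ∘ l) (f ∘ m) := by
  simp [lineFactors]

lemma aeval_lineFactors (l m : Fin 3 → R) (α β γ δ : R) :
    aeval ![C α * X 0 + C γ * X 1, C β * X 0 + C δ * X 1] (lineFactors l m) =
      lineFactors (δ • l - γ • m) (α • m - β • l) := by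
  simp only [lineFactors, map_prod, map_sub, map_mul, algHom_C, aeval_X, algebraMap_eq,
    Matrix.cons_val_zero, Matrix.cons_val_one, Pi.sub_apply, Pi.smul_apply, smul_eq_mul]
  exact Finset.prod_congr rfl fun k _ => by ring

lemma lineFactors_mul (κ l m : Fin 3 → R) :
    lineFactors (κ * l) (κ * m) = C (∏ k, κ k) * lineFactors l m := by
  simp only [lineFactors, map_prod, ← Finset.prod_mul_distrib, Pi.mul_apply, map_mul]
  exact Finset.prod_congr rfl fun k _ => by ring

lemma eval_lineFactors_self (l m : Fin 3 → R) (k : Fin 3) :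
    eval ![l k, m k] (lineFactors l m) = 0 := by
  rw [lineFactors, map_prod]
  exact Finset.prod_eq_zero (Finset.mem_univ k) (by simp [mul_comm])

lemma lineFactors_ne_zero [IsDomain R] {l m : Fin 3 → R} (h : ∀ k, l k ≠ 0 ∨ m k ≠ 0) :
    lineFactors l m ≠ 0 := by
  refine Finset.prod_ne_zero_iff.mpr fun k _ h0 => ?_
  have hm := congrArg (eval ![1, 0]) h0
  have hl := congrArg (eval ![0, 1]) h0
  simp only [map_sub, map_mul, eval_C, eval_X, Matrix.cons_val_zero, Matrix.cons_val_one,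
    mul_one, mul_zero, sub_zero, zero_sub, map_zero, neg_eq_zero] at hm hl
  exact (h k).elim (· hl) (· hm)

end LineForm

section LineParam

variable {K : Type*} [Field K] {n : ℕ}

/-- The points `P k` are the points `l k • u + m k • v` of the line spanned by `u` and `v`, and
`F` restricts to that line as `c ∏ (m k * s - l k * t)`. The value `c = 0` is allowed: it stands
for a line on the hypersurface, with three arbitrary points of it. -/
structure LineParam (F : MvPolynomial (Fin n) K) (P : Fin 3 → ℙ K (Fin n → K))
    (u v : Fin n → K) (c : K) (l m : Fin 3 → K) : Prop where
  lineForm_eq : lineForm F u v = C c * lineFactors l m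
  mk_eq : ∀ k, ∃ h : l k • u + m k • v ≠ 0, Projectivization.mk K _ h = P k

lemma onLine_mk {W : Submodule K (Fin n → K)} {x : Fin n → K} (hx : x ≠ 0) :
    OnLine W (Projectivization.mk K x hx) ↔ x ∈ W := by
  obtain ⟨a, ha⟩ := Projectivization.exists_smul_eq_mk_rep K x hx
  rw [OnLine, ← ha]
  exact Submodule.smul_mem_iff' _ _

lemma isLine_span_pair {u v : Fin n → K} (h : LinearIndependent K ![u, v]) :
    IsLine (Submodule.span K {u, v}) := by
  rw [IsLine, ← Matrix.range_cons_cons_empty u v ![], finrank_span_eq_card h, Fintype.card_fin]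

lemma lineOnSurf_span_pair {F : MvPolynomial (Fin n) K} {u v : Fin n → K}
    (h : lineForm F u v = 0) : LineOnSurf F (Submodule.span K {u, v}) := by
  intro x y hx hy
  obtain ⟨α, β, rfl⟩ := Submodule.mem_span_pair.mp hx
  obtain ⟨γ, δ, rfl⟩ := Submodule.mem_span_pair.mp hy
  rw [← lineForm_eq_lineRestrict, lineForm_linearCombination, h, map_zero]

lemma IsLine.exists_eq_span_pair {W : Submodule K (Fin n → K)} (hW : IsLine W) :
    ∃ u v, LinearIndependent K ![u, v] ∧ W = Submodule.span K {u, v} := by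
  let e := Module.finBasisOfFinrankEq K W hW
  have hcomp : ![(e 0 : Fin n → K), e 1] = W.subtype ∘ e := by
    funext k
    fin_cases k <;> rfl
  refine ⟨e 0, e 1, hcomp ▸ e.linearIndependent.map' W.subtype W.ker_subtype, ?_⟩
  rw [← Matrix.range_cons_cons_empty _ _ ![], hcomp, Set.range_comp, ← Submodule.map_span,
    e.span_eq, Submodule.map_top, Submodule.range_subtype]

lemma LineParam.tripleRel {F : MvPolynomial (Fin n) K} {P : Fin 3 → zeroSet F} {u v : Fin n → K}
    {c : K} {l m : Fin 3 → K} (hind : LinearIndependent K ![u, v])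
    (h : LineParam F (fun k => (P k).1) u v c l m) : TripleRel F (P 0) (P 1) (P 2) := by
  have hu : u ∈ Submodule.span K {u, v} := Submodule.subset_span (by simp)
  have hv : v ∈ Submodule.span K {u, v} := Submodule.subset_span (by simp)
  choose hne hP using h.mk_eq
  refine ⟨Submodule.span K {u, v}, isLine_span_pair hind, ?_⟩
  by_cases hL : LineOnSurf F (Submodule.span K {u, v})
  · have hon (k) : OnLine (Submodule.span K {u, v}) (P k).1 := by
      rw [← hP, onLine_mk]
      exact add_mem (Submodule.smul_mem _ _ hu) (Submodule.smul_mem _ _ hv)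
    exact .inr ⟨hL, hon 0, hon 1, hon 2⟩
  · refine .inl ⟨hL, u, v, hu, hv, hind, c, l, m, hne, ?_, h.lineForm_eq, hP 0, hP 1, hP 2⟩
    rintro rfl
    exact hL (lineOnSurf_span_pair (by simpa using h.lineForm_eq))

lemma TripleRel.exists_lineParam {F : MvPolynomial (Fin n) K} {P Q R : zeroSet F}
    (h : TripleRel F P Q R) :
    ∃ u v, LinearIndependent K ![u, v] ∧ ∃ c l m,
      LineParam F (fun k => (![P, Q, R] k).1) u v c l m := by
  obtain ⟨W, hW, ⟨-, u, v, -, -, hind, c, l, m, hne, -, hF, hP, hQ, hR⟩ | ⟨hL, hP, hQ, hR⟩⟩ := h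
  · refine ⟨u, v, hind, c, l, m, hF, fun k => ⟨hne k, ?_⟩⟩
    fin_cases k
    exacts [hP, hQ, hR]
  · obtain ⟨u, v, hind, rfl⟩ := hW.exists_eq_span_pair
    have hrep (k : Fin 3) : ∃ s t : K, s • u + t • v = (![P, Q, R] k).1.rep := by
      rw [← Submodule.mem_span_pair]
      fin_cases k
      exacts [hP, hQ, hR]
    choose l m hlm using hrep
    refine ⟨u, v, hind, 0, l, m, ?_, fun k => ?_⟩
    · rw [lineForm_eq_lineRestrict,
        hL u v (Submodule.subset_span (by simp)) (Submodule.subset_span (by simp))]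
      simp
    · simp only [hlm]
      exact ⟨Projectivization.rep_nonzero _, Projectivization.mk_rep _⟩

lemma LineParam.linearCombination {F : MvPolynomial (Fin n) K} {P : Fin 3 → ℙ K (Fin n → K)}
    {u v : Fin n → K} {c : K} {l m : Fin 3 → K} (h : LineParam F P u v c l m) {α β γ δ : K}
    (hdet : α * δ - β * γ ≠ 0) :
    LineParam F P (α • u + β • v) (γ • u + δ • v) c (δ • l - γ • m) (α • m - β • l) := by
  refine ⟨?_, fun k => ?_⟩
  · rw [lineForm_linearCombination, h.lineForm_eq, map_mul, algHom_C, algebraMap_eq,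
      aeval_lineFactors]
  · obtain ⟨hne, hP⟩ := h.mk_eq k
    have hpt : (δ • l - γ • m) k • (α • u + β • v) + (α • m - β • l) k • (γ • u + δ • v) =
        (α * δ - β * γ) • (l k • u + m k • v) := by
      simp only [Pi.sub_apply, Pi.smul_apply, smul_eq_mul]
      module
    refine ⟨hpt ▸ smul_ne_zero hdet hne, ?_⟩
    rw [← hP, Projectivization.mk_eq_mk_iff']
    exact ⟨_, hpt.symm⟩

lemma LineParam.of_mul {F : MvPolynomial (Fin n) K} {P : Fin 3 → ℙ K (Fin n → K)}
    {u v : Fin n → K} {c : K} {κ l m : Fin 3 → K} (h : LineParam F P u v c (κ * l) (κ * m)) :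
    LineParam F P u v (c * ∏ k, κ k) l m := by
  refine ⟨by rw [h.lineForm_eq, lineFactors_mul, C_mul, mul_assoc], fun k => ?_⟩
  obtain ⟨hne, hP⟩ := h.mk_eq k
  have hpt : (κ * l) k • u + (κ * m) k • v = κ k • (l k • u + m k • v) := by
    simp only [Pi.mul_apply]
    module
  have hne' : l k • u + m k • v ≠ 0 := right_ne_zero_of_smul (hpt ▸ hne)
  refine ⟨hne', ?_⟩
  rw [← hP, eq_comm, Projectivization.mk_eq_mk_iff']
  exact ⟨_, hpt.symm⟩

end LineParam

section IntegralModel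

variable {R K : Type*} [CommRing R] [Field K] [Algebra R K] {n : ℕ}

/-- `a` and `b` are the rows of a matrix whose `i`-th and `j`-th columns form the identity. Such a
pair stays linearly independent after any ring homomorphism to a field. -/
structure IsEchelonPair (a b : Fin n → R) (i j : Fin n) : Prop where
  left_i : a i = 1
  left_j : a j = 0
  right_i : b i = 0
  right_j : b j = 1

/-- A `LineParam` with integral basis and primitive integral coordinates of the three points. -/
structure IntegralLineParam (F : MvPolynomial (Fin n) R) (P : Fin 3 → ℙ K (Fin n → K))
    (a b : Fin n → R) (c : R) (l m : Fin 3 → R) : Prop where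
  lineForm_eq : lineForm F a b = C c * lineFactors l m
  isUnit_or_isUnit : ∀ k, IsUnit (l k) ∨ IsUnit (m k)
  mk_eq : ∀ k, ∃ h : algebraMap R K ∘ (l k • a + m k • b) ≠ 0, Projectivization.mk K _ h = P k

lemma IsEchelonPair.symm {a b : Fin n → R} {i j : Fin n} (h : IsEchelonPair a b i j) :
    IsEchelonPair b a j i :=
  ⟨h.right_j, h.right_i, h.left_j, h.left_i⟩

lemma IsEchelonPair.ne [Nontrivial R] {a b : Fin n → R} {i j : Fin n}
    (h : IsEchelonPair a b i j) : i ≠ j := by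
  rintro rfl
  exact one_ne_zero (h.left_i.symm.trans h.left_j)

lemma IsEchelonPair.exists_isUnit {a b : Fin n → R} {i j : Fin n} (h : IsEchelonPair a b i j)
    {l m : R} (hlm : IsUnit l ∨ IsUnit m) : ∃ k, IsUnit ((l • a + m • b) k) :=
  hlm.elim (fun hl => ⟨i, by simpa [h.left_i, h.right_i]⟩)
    (fun hm => ⟨j, by simpa [h.left_j, h.right_j]⟩)

lemma exists_minor_ne_zero {u v : Fin n → K} (h : LinearIndependent K ![u, v]) :
    ∃ i j, u i * v j - u j * v i ≠ 0 := by
  by_contra! hminor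
  have hv : v = 0 := funext fun j => by
    refine (LinearIndependent.pair_iff.mp h (v j) (-u j) (funext fun i => ?_)).1
    simp only [Pi.add_apply, Pi.smul_apply, smul_eq_mul, Pi.zero_apply]
    linear_combination hminor i j
  exact h.ne_zero 1 hv

lemma isUnit_of_C_dvd_lineFactors [IsLocalRing R] {l m : Fin 3 → R}
    (h : ∀ k, IsUnit (l k) ∨ IsUnit (m k)) {r : R} (hr : C r ∣ lineFactors l m) : IsUnit r := by
  by_contra hu
  have hres := map_dvd (MvPolynomial.map (IsLocalRing.residue R)) hr
  rw [map_C, (IsLocalRing.residue_eq_zero_iff r).mpr hu, map_zero, zero_dvd_iff,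
    map_lineFactors] at hres
  refine lineFactors_ne_zero (fun k => ?_) hres
  simpa [IsLocalRing.residue_ne_zero_iff_isUnit] using h k

variable [IsDomain R] [IsFractionRing R K]

lemma exists_eq_C_mul_of_map_eq [ValuationRing R] {σ : Type*} {f g : MvPolynomial σ R}
    (hg : ∀ r, C r ∣ g → IsUnit r) {c : K}
    (h : MvPolynomial.map (algebraMap R K) f = C c * MvPolynomial.map (algebraMap R K) g) :
    ∃ c', f = C c' * g := by
  have hinj := map_injective (σ := σ) _ (IsFractionRing.injective R K)
  rcases eq_or_ne c 0 with rfl | hc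
  · exact ⟨0, hinj (by simpa using h)⟩
  rcases ValuationRing.isInteger_or_isInteger R c with ⟨d, rfl⟩ | ⟨d, hd⟩
  · exact ⟨d, hinj (by simpa using h)⟩
  · have hfg : C d * f = g := hinj <| by
      rw [map_mul, map_C, h, hd, ← mul_assoc, ← C_mul, inv_mul_cancel₀ hc, C_1, one_mul]
    obtain ⟨e, rfl⟩ := hg d ⟨f, hfg.symm⟩
    refine ⟨↑e⁻¹, ?_⟩
    rw [← hfg, ← mul_assoc, ← C_mul, Units.inv_mul, C_1, one_mul]

variable [ValuationRing R]

variable (R) in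
lemma exists_forall_eq_smul {ι : Type*} [Finite ι] [Nonempty ι] (x : ι → K) :
    ∃ i, ∀ k, ∃ r : R, r • x i = x k :=
  Finite.exists_max fun i => ValuationRing.valuation R K (x i)

variable (R) in
lemma exists_eq_smul_primitive {ι : Type*} [Finite ι] {x : ι → K} (hx : x ≠ 0) :
    ∃ (κ : K) (y : ι → R), x = κ • (algebraMap R K ∘ y) ∧ ∃ i, y i = 1 := by
  obtain ⟨j, hj⟩ := Function.ne_iff.mp hx
  have : Nonempty ι := ⟨j⟩
  obtain ⟨i, hi⟩ := exists_forall_eq_smul R x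
  choose r hr using hi
  have hxi : x i ≠ 0 := right_ne_zero_of_smul (hr j ▸ hj : r j • x i ≠ 0)
  refine ⟨x i, r, funext fun k => ?_, i, ?_⟩
  · rw [← hr k, Algebra.smul_def, mul_comm]
    rfl
  · exact IsFractionRing.injective R K <| mul_right_cancel₀ hxi <| by
      rw [← Algebra.smul_def, hr, map_one, one_mul]

variable (R) in
-- Normalizing by the minor of largest valuation makes all the entries integral.
lemma exists_isEchelonPair {u v : Fin n → K} (h : LinearIndependent K ![u, v]) :
    ∃ (a b : Fin n → R) (i j : Fin n), IsEchelonPair a b i j ∧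
      ∃ α β γ δ : K, α * δ - β * γ ≠ 0 ∧
        algebraMap R K ∘ a = α • u + β • v ∧ algebraMap R K ∘ b = γ • u + δ • v := by
  obtain ⟨i₁, j₁, h₁⟩ := exists_minor_ne_zero h
  obtain ⟨κ, y, hy, ⟨i, j⟩, hij⟩ := exists_eq_smul_primitive R
    (x := fun q : Fin n × Fin n => u q.1 * v q.2 - u q.2 * v q.1)
    (Function.ne_iff.mpr ⟨(i₁, j₁), h₁⟩)
  have hminor (s t : Fin n) : u s * v t - u t * v s = κ * algebraMap R K (y (s, t)) :=
    congrFun hy (s, t)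
  have hκ : κ ≠ 0 := left_ne_zero_of_mul (hminor i₁ j₁ ▸ h₁)
  have hentry {s t : Fin n} {r : R} (hr : u s * v t - u t * v s = κ * algebraMap R K r) :
      y (s, t) = r :=
    IsFractionRing.injective R K (mul_left_cancel₀ hκ ((hminor s t).symm.trans hr))
  have hΔ : u i * v j - u j * v i = κ := by rw [hminor, hij, map_one, mul_one]
  refine ⟨fun k => y (k, j), fun k => y (i, k), i, j,
    ⟨hij, hentry (by simp), hentry (by simp), hij⟩,
    v j / κ, -u j / κ, -v i / κ, u i / κ, ?_, funext fun k => ?_, funext fun k => ?_⟩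
  · have : v j / κ * (u i / κ) - -u j / κ * (-v i / κ) = κ⁻¹ := by
      field_simp
      linear_combination hΔ
    exact this ▸ inv_ne_zero hκ
  · simp only [Function.comp_apply, Pi.add_apply, Pi.smul_apply, smul_eq_mul]
    field_simp
    linear_combination -hminor k j
  · simp only [Function.comp_apply, Pi.add_apply, Pi.smul_apply, smul_eq_mul]
    field_simp
    linear_combination -hminor i k

variable (R) in
lemma exists_isEchelonPair_ne {u v : Fin n → K} (h : LinearIndependent K ![u, v]) (i₀ : Fin n) :
    ∃ (a b : Fin n → R) (i j : Fin n), i ≠ i₀ ∧ IsEchelonPair a b i j ∧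
      ∃ α β γ δ : K, α * δ - β * γ ≠ 0 ∧
        algebraMap R K ∘ a = α • u + β • v ∧ algebraMap R K ∘ b = γ • u + δ • v := by
  obtain ⟨a, b, i, j, hab, α, β, γ, δ, hdet, ha, hb⟩ := exists_isEchelonPair R h
  rcases eq_or_ne i i₀ with rfl | hi
  · exact ⟨b, a, j, i, hab.ne.symm, hab.symm, γ, δ, α, β,
      fun h0 => hdet (by linear_combination -h0), hb, ha⟩
  · exact ⟨a, b, i, j, hi, hab, α, β, γ, δ, hdet, ha, hb⟩

lemma LineParam.exists_integral {F : MvPolynomial (Fin n) R} {P : Fin 3 → ℙ K (Fin n → K)}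
    {a b : Fin n → R} {c : K} {l m : Fin 3 → K}
    (h : LineParam (MvPolynomial.map (algebraMap R K) F) P (algebraMap R K ∘ a)
      (algebraMap R K ∘ b) c l m) :
    ∃ (c : R) (l m : Fin 3 → R), IntegralLineParam F P a b c l m := by
  have hcoord (k) : ![l k, m k] ≠ 0 := by
    obtain ⟨hne, -⟩ := h.mk_eq k
    contrapose! hne
    have hl : l k = 0 := congrFun hne 0
    have hm : m k = 0 := congrFun hne 1
    rw [hl, hm, zero_smul, zero_smul, add_zero]
  choose κ y hy hunit using fun k => exists_eq_smul_primitive R (hcoord k)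
  have hl : l = κ * (algebraMap R K ∘ fun k => y k 0) := funext fun k => congrFun (hy k) 0
  have hm : m = κ * (algebraMap R K ∘ fun k => y k 1) := funext fun k => congrFun (hy k) 1
  rw [hl, hm] at h
  have hlm (k) : IsUnit (y k 0) ∨ IsUnit (y k 1) := by
    obtain ⟨i, hi⟩ := hunit k
    fin_cases i
    exacts [.inl (hi ▸ isUnit_one), .inr (hi ▸ isUnit_one)]
  have hF := h.of_mul.lineForm_eq
  rw [← map_lineForm, ← map_lineFactors] at hF
  obtain ⟨d, hd⟩ := exists_eq_C_mul_of_map_eq (fun _ => isUnit_of_C_dvd_lineFactors hlm) hF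
  refine ⟨d, _, _, hd, hlm, fun k => ?_⟩
  simp only [comp_smul_add_smul]
  exact h.of_mul.mk_eq k

end IntegralModel

section Vertex

variable {R k : Type*} [CommRing R] [Field k] {M : R} {a b : Fin 4 → R} {c : R} {l m : Fin 3 → R}

/-- The equation `x³ + y³ + z (z² + M w²)` over an arbitrary commutative ring: over `ℤ_[p]` it is
the integral model of the surface. -/
def surfForm (M : R) : MvPolynomial (Fin 4) R :=
  X 0 ^ 3 + X 1 ^ 3 + X 2 * (X 2 ^ 2 + C M * X 3 ^ 2)

lemma map_surfForm {R' : Type*} [CommRing R'] (f : R →+* R') (M : R) :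
    MvPolynomial.map f (surfForm M) = surfForm (f M) := by
  simp [surfForm]

lemma surfForm_isHomogeneous (M : R) : (surfForm M).IsHomogeneous 3 := by
  have hX (i : Fin 4) (d : ℕ) : (X i ^ d : MvPolynomial (Fin 4) R).IsHomogeneous d :=
    isHomogeneous_X_pow i d
  have hCX : (C M * X 3 ^ 2 : MvPolynomial (Fin 4) R).IsHomogeneous 2 := by
    simpa using (isHomogeneous_C (Fin 4) M).mul (hX 3 2)
  exact ((hX 0 3).add (hX 1 3)).add ((isHomogeneous_X R 2).mul ((hX 2 2).add hCX))

lemma eval_surfForm (M : R) (x : Fin 4 → R) :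
    eval x (surfForm M) = x 0 ^ 3 + x 1 ^ 3 + x 2 * (x 2 ^ 2 + M * x 3 ^ 2) := by
  simp [surfForm]

lemma lineForm_surfForm_zero (h : ∀ i : Fin 3, b i.castSucc = 0) :
    lineForm (surfForm 0) a b = C (a 0 ^ 3 + a 1 ^ 3 + a 2 ^ 3) * X 0 ^ 3 := by
  have h0 : b 0 = 0 := h 0
  have h1 : b 1 = 0 := h 1
  have h2 : b 2 = 0 := h 2
  simp only [lineForm, surfForm, map_add, map_mul, map_pow, aeval_X, h0, h1, h2, map_zero]
  ring

lemma eval_lineForm_surfForm_right (hL : lineForm (surfForm M) a b = C c * lineFactors l m)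
    (hb : b 3 = 1) :
    b 0 ^ 3 + b 1 ^ 3 + b 2 ^ 3 + M * b 2 = -(c * (l 0 * l 1 * l 2)) := by
  have h := congrArg (eval ![0, 1]) hL
  rw [eval_lineForm, eval_surfForm] at h
  simp only [zero_smul, one_smul, zero_add, hb, lineFactors, Fin.prod_univ_three, map_mul, map_sub,
    eval_C, eval_X, Matrix.cons_val_zero, Matrix.cons_val_one] at h
  linear_combination h

lemma eval_pderiv_lineForm_surfForm (hL : lineForm (surfForm M) a b = C c * lineFactors l m)
    (ha : a 3 = 0) (hb : b 3 = 1) :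
    3 * (a 0 * b 0 ^ 2 + a 1 * b 1 ^ 2 + a 2 * b 2 ^ 2) + M * a 2 =
      c * (m 0 * l 1 * l 2 + l 0 * m 1 * l 2 + l 0 * l 1 * m 2) := by
  have h := congrArg (fun f => eval ![0, 1] (pderiv 0 f)) hL
  simp only [lineForm, surfForm, lineFactors, Fin.prod_univ_three, ha, hb, map_add, map_sub,
    map_mul, map_pow, aeval_X, algHom_C, algebraMap_eq, Derivation.leibniz, Derivation.leibniz_pow,
    pderiv_X_self, pderiv_X_of_ne one_ne_zero, pderiv_C, pderiv_one, smul_eq_mul, nsmul_eq_mul,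
    map_natCast, eval_C, eval_X, Matrix.cons_val_zero, Matrix.cons_val_one, map_zero, map_one] at h
  push_cast at h
  linear_combination h

lemma map_leading_eq_zero {π : R →+* k} (hM : π M = 0)
    (hL : lineForm (surfForm M) a b = C c * lineFactors l m)
    (hb : ∀ i : Fin 3, π (b i.castSucc) = 0) (hlm : ∀ i, π (l i) ≠ 0 ∨ π (m i) ≠ 0)
    (hl : ∃ i, π (l i) ≠ 0) : π c = 0 := by
  obtain ⟨i, hi⟩ := hl
  have hred := congrArg (MvPolynomial.map π) hL
  rw [map_lineForm, map_surfForm, hM, lineForm_surfForm_zero hb, map_mul, map_C,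
    map_lineFactors] at hred
  have hcone : ((π ∘ a) 0 ^ 3 + (π ∘ a) 1 ^ 3 + (π ∘ a) 2 ^ 3) * (π ∘ l) i ^ 3 = 0 := by
    have h := congrArg (eval ![(π ∘ l) i, (π ∘ m) i]) hred
    simpa only [map_mul, map_pow, eval_C, eval_X, eval_lineFactors_self, mul_zero,
      Matrix.cons_val_zero] using h
  rw [(mul_eq_zero.mp hcone).resolve_right (pow_ne_zero 3 hi), C_0, zero_mul, eq_comm,
    mul_eq_zero] at hred
  exact C_eq_zero.mp (hred.resolve_right (lineFactors_ne_zero hlm))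

lemma existsUnique_eq_zero {x y : Fin 3 → k} (hx : x 0 * x 1 * x 2 = 0)
    (hxy : y 0 * x 1 * x 2 + x 0 * y 1 * x 2 + x 0 * x 1 * y 2 ≠ 0) : ∃! i, x i = 0 := by
  obtain ⟨i, hi⟩ : ∃ i, x i = 0 := by
    rcases mul_eq_zero.mp hx with h | h
    · exact (mul_eq_zero.mp h).elim (⟨0, ·⟩) (⟨1, ·⟩)
    · exact ⟨2, h⟩
  refine ⟨i, hi, fun j hj => by_contra fun hne => hxy ?_⟩
  fin_cases i <;> fin_cases j <;> simp_all

-- The coefficients of `t³` and `s t²` in the restricted equation are divisible by `M`; reducing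
-- their quotients by `M` gives `∏ l = 0` and `a 2 ≠ 0 → ∑ m ∏ l ≠ 0` over `k`.
lemma existsUnique_map_eq_zero [IsDomain R] {π : R →+* k} (hM : M ≠ 0)
    (hπ : ∀ x, π x = 0 ↔ M ∣ x) (hL : lineForm (surfForm M) a b = C c * lineFactors l m)
    (ha3 : a 3 = 0) (hb3 : b 3 = 1) (ha2 : π (a 2) ≠ 0)
    (hb : ∀ i : Fin 3, π (b i.castSucc) = 0) (hlm : ∀ i, π (l i) ≠ 0 ∨ π (m i) ≠ 0)
    (hl : ∃ i, π (l i) ≠ 0) : ∃! i, π (l i) = 0 := by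
  have hπM : π M = 0 := (hπ M).mpr dvd_rfl
  obtain ⟨c', rfl⟩ := (hπ c).mp (map_leading_eq_zero hπM hL hb hlm hl)
  choose b' hb' using fun i => (hπ _).mp (hb i)
  have hb0 : b 0 = M * b' 0 := hb' 0
  have hb1 : b 1 = M * b' 1 := hb' 1
  have hb2 : b 2 = M * b' 2 := hb' 2
  have hcube := eval_lineForm_surfForm_right hL hb3
  have hlin := eval_pderiv_lineForm_surfForm hL ha3 hb3
  rw [hb0, hb1, hb2] at hcube hlin
  have hcube' : M * (M * (b' 0 ^ 3 + b' 1 ^ 3 + b' 2 ^ 3) + b' 2) = -(c' * (l 0 * l 1 * l 2)) :=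
    mul_left_cancel₀ hM (by linear_combination hcube)
  have hlin' : M * (3 * (a 0 * b' 0 ^ 2 + a 1 * b' 1 ^ 2 + a 2 * b' 2 ^ 2)) + a 2 =
      c' * (m 0 * l 1 * l 2 + l 0 * m 1 * l 2 + l 0 * l 1 * m 2) :=
    mul_left_cancel₀ hM (by linear_combination hlin)
  have hprod := congrArg π hcube'
  have hsum := congrArg π hlin'
  simp only [map_add, map_mul, map_neg, hπM, zero_mul, zero_add] at hprod hsum
  obtain ⟨hc', hsum'⟩ := mul_ne_zero_iff.mp (hsum ▸ ha2)
  have hl0 : π (l 0) * π (l 1) * π (l 2) = 0 :=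
    (mul_eq_zero.mp (neg_eq_zero.mp hprod.symm)).resolve_left hc'
  exact existsUnique_eq_zero (x := π ∘ l) (y := π ∘ m) hl0 hsum'

end Vertex

section GroupOfPoints

variable {K : Type*} [Field K] {n : ℕ} {F : MvPolynomial (Fin n) K} {A : Type*} [AddCommGroup A]

/-- The homomorphism out of `H_S(K)` induced by a map on points that kills all three point sums. -/
def HS.lift (ψ : zeroSet F → A) (hψ : ∀ P Q R, TripleRel F P Q R → ψ P + ψ Q + ψ R = 0) :
    HS F →+ A :=
  QuotientAddGroup.lift (Gpp F) (FreeAbelianGroup.lift ψ) fun _ hx =>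
    (AddSubgroup.closure_le (FreeAbelianGroup.lift ψ).ker).mpr
      (by rintro _ ⟨P, Q, R, h, rfl⟩; simpa [AddMonoidHom.mem_ker] using hψ P Q R h) hx.1

lemma HS.lift_HClass (ψ : zeroSet F → A)
    (hψ : ∀ P Q R, TripleRel F P Q R → ψ P + ψ Q + ψ R = 0) (P : zeroSet F) :
    HS.lift ψ hψ (HClass F P) = ψ P :=
  FreeAbelianGroup.lift_apply_of ψ P

lemma HS.lift_surjective {ψ : zeroSet F → A}
    (hψ : ∀ P Q R, TripleRel F P Q R → ψ P + ψ Q + ψ R = 0)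
    (h : AddSubgroup.closure (Set.range ψ) = ⊤) : Function.Surjective (HS.lift ψ hψ) := by
  rw [← AddMonoidHom.range_eq_top, eq_top_iff, ← h, AddSubgroup.closure_le]
  rintro _ ⟨P, rfl⟩
  exact ⟨HClass F P, HS.lift_HClass ψ hψ P⟩

lemma eval_eq_zero_of_mk_mem_zeroSet {d : ℕ} (hF : F.IsHomogeneous d) {v : Fin n → K}
    {hv : v ≠ 0} (h : Projectivization.mk K v hv ∈ zeroSet F) : eval v F = 0 := by
  obtain ⟨a, ha⟩ := Projectivization.exists_smul_eq_mk_rep K v hv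
  have hrep : eval (Projectivization.mk K v hv).rep F = 0 := h
  rw [← ha, Units.smul_def, eval_smul_of_isHomogeneous hF] at hrep
  exact (mul_eq_zero.mp hrep).resolve_left (pow_ne_zero d a.ne_zero)

lemma H0diff_self (O : zeroSet F) : H0diff F O O = 0 :=
  Subtype.ext (sub_self _)

lemma H0diff_add_add_eq_zero {P Q R O : zeroSet F} (h : TripleRel F P Q R)
    (hO : TripleRel F O O O) : H0diff F P O + H0diff F Q O + H0diff F R O = 0 := by
  have hmem : FreeAbelianGroup.of P + FreeAbelianGroup.of Q + FreeAbelianGroup.of R -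
      (FreeAbelianGroup.of O + FreeAbelianGroup.of O + FreeAbelianGroup.of O) ∈ Gpp F :=
    ⟨(Gp F).sub_mem (AddSubgroup.subset_closure ⟨P, Q, R, h, rfl⟩)
      (AddSubgroup.subset_closure ⟨O, O, O, hO, rfl⟩), by simp [degHom]⟩
  refine Subtype.ext (Eq.trans ?_ ((QuotientAddGroup.eq_zero_iff _).mpr hmem))
  simp only [AddSubgroup.coe_add, H0diff, HClass, QuotientAddGroup.mk'_apply,
    QuotientAddGroup.mk_add, QuotientAddGroup.mk_sub]
  abel

lemma coe_lift_H0diff (O : zeroSet F) (y : GS F) :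
    (FreeAbelianGroup.lift (fun P => H0diff F P O) y : HS F) =
      QuotientAddGroup.mk' (Gpp F) y - degHom F y • HClass F O := by
  induction y using FreeAbelianGroup.induction_on with
  | zero => simp
  | of P => simp [H0diff, degHom, HClass]
  | neg P h =>
    rw [map_neg, map_neg, map_neg, neg_smul, AddSubgroup.coe_neg, h]
    abel
  | add x y hx hy =>
    rw [map_add, map_add, map_add, add_smul, AddSubgroup.coe_add, hx, hy]
    abel

lemma closure_range_H0diff (O : zeroSet F) :
    AddSubgroup.closure (Set.range fun P => H0diff F P O) = ⊤ := by
  have hmem (y : GS F) : FreeAbelianGroup.lift (fun P => H0diff F P O) y ∈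
      AddSubgroup.closure (Set.range fun P => H0diff F P O) := by
    induction y using FreeAbelianGroup.induction_on with
    | zero => simp
    | of P =>
      rw [FreeAbelianGroup.lift_apply_of]
      exact AddSubgroup.subset_closure ⟨P, rfl⟩
    | neg P h => simpa only [map_neg] using neg_mem h
    | add x y hx hy => simpa only [map_add] using add_mem hx hy
  refine eq_top_iff.mpr fun ⟨x, hx⟩ _ => ?_
  obtain ⟨y, rfl⟩ := QuotientAddGroup.mk'_surjective (Gpp F) x
  have hdeg : degHom F y = 0 := hx
  have hy : FreeAbelianGroup.lift (fun P => H0diff F P O) y = ⟨_, hx⟩ :=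
    Subtype.ext (by rw [coe_lift_H0diff, hdeg, zero_smul, sub_zero])
  exact hy ▸ hmem y

end GroupOfPoints

section PicardClass

variable (p : ℕ) [Fact p.Prime]

/-- The class of the divisor `T - O` in `Pic⁰(C_p) / 2 Pic⁰(C_p)`. -/
def pic0Class (T : zeroSet (Gcubic p)) : ModP 2 (Pic0C p) :=
  QuotientAddGroup.mk (H0diff (Gcubic p) T (OPt p))

lemma closure_range_pic0Class : AddSubgroup.closure (Set.range (pic0Class p)) = ⊤ := by
  have hsurj : Function.Surjective (QuotientAddGroup.mk' (nsmulAddMonoidHom 2 :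
    Pic0C p →+ Pic0C p).range) := QuotientAddGroup.mk'_surjective _
  rw [← AddSubgroup.map_top_of_surjective _ hsurj, ← closure_range_H0diff (OPt p),
    AddMonoidHom.map_closure, ← Set.range_comp]
  rfl

variable {p}

lemma pic0Class_OPt : pic0Class p (OPt p) = 0 := by
  rw [pic0Class, H0diff_self, QuotientAddGroup.mk_zero]

lemma pic0Class_add_self (T : zeroSet (Gcubic p)) : pic0Class p T + pic0Class p T = 0 :=
  ZModModule.add_self _

-- The tangent line at a point with `z = 0` meets the curve only there.
lemma tripleRel_flex {T : zeroSet (Gcubic p)} {w : Fin 3 → ZMod p} (hw : w ≠ 0) (hw2 : w 2 = 0)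
    (hT : Projectivization.mk (ZMod p) w hw = T.1) : TripleRel (Gcubic p) T T T := by
  have hcube : w 0 ^ 3 + w 1 ^ 3 = 0 := by
    have hw0 : eval w (Gcubic p) = 0 := eval_eq_zero_of_mk_mem_zeroSet (Gcubic_hom p) (hT ▸ T.2)
    simpa [Gcubic, hw2] using hw0
  refine LineParam.tripleRel (P := ![T, T, T]) (u := w) (v := ![0, 0, 1]) (c := -1) (l := 1)
    (m := 0) (LinearIndependent.pair_iff.mpr fun s t hst => ?_) ⟨?_, fun k => ?_⟩
  · have ht : t = 0 := by simpa [hw2] using congrFun hst 2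
    refine ⟨?_, ht⟩
    simpa [ht, hw] using hst
  · have hC : C (w 0) ^ 3 + C (w 1) ^ 3 = (0 : MvPolynomial (Fin 2) (ZMod p)) := by
      rw [← C_pow, ← C_pow, ← C_add, hcube, C_0]
    simp only [lineForm, Gcubic, lineFactors, hw2, map_add, map_pow, aeval_X, Fin.prod_univ_three,
      Matrix.cons_val, C_0, C_1, C_neg, Pi.zero_apply, Pi.one_apply]
    linear_combination X 0 ^ 3 * hC
  · have hTk : ![T, T, T] k = T := by fin_cases k <;> rfl
    simpa [hTk] using ⟨hw, hT⟩

lemma pic0Class_add_add_eq_zero {P Q R : zeroSet (Gcubic p)} (h : TripleRel (Gcubic p) P Q R) :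
    pic0Class p P + pic0Class p Q + pic0Class p R = 0 := by
  have hO : TripleRel (Gcubic p) (OPt p) (OPt p) (OPt p) := tripleRel_flex (O_ne_zero p) rfl rfl
  rw [pic0Class, pic0Class, pic0Class, ← QuotientAddGroup.mk_add, ← QuotientAddGroup.mk_add,
    H0diff_add_add_eq_zero h hO, QuotientAddGroup.mk_zero]

lemma pic0Class_flex {T : zeroSet (Gcubic p)} {w : Fin 3 → ZMod p} (hw : w ≠ 0) (hw2 : w 2 = 0)
    (hT : Projectivization.mk (ZMod p) w hw = T.1) : pic0Class p T = 0 := by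
  simpa [pic0Class_add_self] using pic0Class_add_add_eq_zero (tripleRel_flex hw hw2 hT)

end PicardClass

section HenselLift

universe u

lemma exists_lift_sum_pow_eq_zero {R k : Type u} [CommRing R] [HenselianLocalRing R] [Field k]
    {π : R →+* k} (hπ : Function.Surjective π) {n : ℕ} (hn : (n : k) ≠ 0) {ι : Type*} [Fintype ι]
    {w : ι → k} (hw : w ≠ 0) (h : ∑ i, w i ^ n = 0) :
    ∃ x : ι → R, ∑ i, x i ^ n = 0 ∧ π ∘ x = w := by
  classical
  obtain ⟨i, hi⟩ := Function.ne_iff.mp hw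
  choose y hy using fun j => hπ (w j)
  obtain ⟨A, hA⟩ : ∃ A, ∑ j ∈ Finset.univ.erase i, y j ^ n = A := ⟨_, rfl⟩
  let f : Polynomial R := Polynomial.X ^ n + Polynomial.C A
  have hroot : f.eval₂ π (w i) = 0 := by
    have hπA : π A = ∑ j ∈ Finset.univ.erase i, w j ^ n := by
      simp only [← hA, map_sum, map_pow, hy]
    rw [← Finset.add_sum_erase _ _ (Finset.mem_univ i), ← hπA] at h
    simpa [f] using h
  have hsimple : f.derivative.eval₂ π (w i) ≠ 0 := by
    have hderiv : f.derivative.eval₂ π (w i) = n * w i ^ (n - 1) := by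
      simp [f, Polynomial.derivative_X_pow]
    rw [hderiv]
    exact mul_ne_zero hn (pow_ne_zero _ hi)
  have hmonic : f.Monic := Polynomial.monic_X_pow_add_C _ fun h0 => hn (by simp [h0])
  have hensel := (HenselianLocalRing.TFAE R).out 0 2
  obtain ⟨z, hz, hzi⟩ := hensel.mp inferInstance π hπ f hmonic (w i) hroot hsimple
  refine ⟨Function.update y i z, ?_, funext fun j => ?_⟩
  · rw [← Finset.add_sum_erase _ _ (Finset.mem_univ i), Function.update_self,
      Finset.sum_congr rfl fun j hj => by rw [Function.update_of_ne (Finset.ne_of_mem_erase hj)]]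
    simpa [f, hA] using hz
  · rcases eq_or_ne j i with rfl | hj
    · simpa using hzi
    · simpa [hj] using hy j

end HenselLift

section Reduction

variable {p : ℕ} [Fact p.Prime]

lemma henselianLocalRing_padicInt : HenselianLocalRing ℤ_[p] where
  is_henselian f hf a₀ h₀ h₁ := HenselianRing.is_henselian f hf a₀ h₀ (h₁.map _)

lemma toZMod_eq_zero_iff_not_isUnit (x : ℤ_[p]) : PadicInt.toZMod x = 0 ↔ ¬IsUnit x := by
  rw [← RingHom.mem_ker, PadicInt.ker_toZMod, IsLocalRing.mem_maximalIdeal, mem_nonunits_iff]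

lemma toZMod_ne_zero_iff_isUnit (x : ℤ_[p]) : PadicInt.toZMod x ≠ 0 ↔ IsUnit x := by
  rw [Ne, toZMod_eq_zero_iff_not_isUnit, not_not]

lemma toZMod_eq_zero_iff_dvd {M : ℤ_[p]} (hM : Irreducible M) (x : ℤ_[p]) :
    PadicInt.toZMod x = 0 ↔ M ∣ x := by
  rw [← RingHom.mem_ker, PadicInt.ker_toZMod, hM.maximalIdeal_eq, Ideal.mem_span_singleton]

lemma redVec_smul_add_smul (s t : ℤ_[p]) (u v : Fin 4 → ℤ_[p]) :
    redVec p (s • u + t • v) =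
      PadicInt.toZMod s • redVec p u + PadicInt.toZMod t • redVec p v := by
  ext
  simp [redVec]

lemma exists_redVec_eq_of_ne {i : Fin 4} (hi : i ≠ 3) :
    ∃ i' : Fin 3, ∀ v : Fin 4 → ℤ_[p], redVec p v i' = PadicInt.toZMod (v i) :=
  ⟨i.castPred hi, fun v => by simp [redVec]⟩

lemma map_toZMod_lineForm_surfForm {M : ℤ_[p]} (hM : PadicInt.toZMod M = 0)
    (a b : Fin 4 → ℤ_[p]) :
    MvPolynomial.map PadicInt.toZMod (lineForm (surfForm M) a b) =
      lineForm (Gcubic p) (redVec p a) (redVec p b) := by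
  have hcone : surfForm (0 : ZMod p) = rename Fin.castSucc (Gcubic p) := by
    simp only [surfForm, Gcubic, C_0, map_add, map_pow, rename_X]
    ring_nf
    rfl
  rw [map_lineForm, map_surfForm, hM, hcone, lineForm_rename]
  rfl

lemma linearIndependent_pair_of_apply {k ι : Type*} [Field k] {u v : ι → k} {i : ι}
    (hu : u i ≠ 0) (hvi : v i = 0) (hv : v ≠ 0) : LinearIndependent k ![u, v] := by
  refine LinearIndependent.pair_iff.mpr fun s t hst => ?_
  have hs : s = 0 := by simpa [hvi, hu] using congrFun hst i
  exact ⟨hs, by simpa [hs, hv] using hst⟩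

variable {M : ℤ_[p]} {φ : zeroSet (MvPolynomial.map (algebraMap ℤ_[p] ℚ_[p]) (surfForm M)) →
    zeroSet (Gcubic p)}

lemma PhiSpec.surjective (hp3 : p ≠ 3) (hφ : PhiSpec p _ φ) : Function.Surjective φ := by
  intro T
  have h3 : ((3 : ℕ) : ZMod p) ≠ 0 := by
    rwa [Ne, ZMod.natCast_eq_zero_iff, Nat.prime_dvd_prime_iff_eq Fact.out Nat.prime_three]
  have hT : ∑ i, T.1.rep i ^ 3 = 0 := by
    have h : eval T.1.rep (Gcubic p) = 0 := T.2
    simpa [Gcubic, Fin.sum_univ_three] using h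
  have := henselianLocalRing_padicInt (p := p)
  obtain ⟨x, hx, hxT⟩ := exists_lift_sum_pow_eq_zero
    (ZMod.ringHom_surjective (PadicInt.toZMod (p := p))) h3 T.1.rep_nonzero hT
  let v : Fin 4 → ℤ_[p] := Fin.snoc x 0
  have hred : redVec p v = T.1.rep := by
    rw [← hxT]
    ext i
    simp [redVec, v]
  have hred0 : redVec p v ≠ 0 := hred ▸ T.1.rep_nonzero
  obtain ⟨i, hi⟩ := Function.ne_iff.mp hred0
  have hunit : IsUnit (v i.castSucc) := (toZMod_ne_zero_iff_isUnit _).mp hi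
  have hv : algebraMap ℤ_[p] ℚ_[p] ∘ v ≠ 0 := Function.ne_iff.mpr
    ⟨i.castSucc, by simpa using hunit.ne_zero⟩
  have heval : eval (algebraMap ℤ_[p] ℚ_[p] ∘ v)
      (MvPolynomial.map (algebraMap ℤ_[p] ℚ_[p]) (surfForm M)) = 0 := by
    have hsum : x 0 ^ 3 + x 1 ^ 3 + x 2 ^ 3 = 0 := by simpa [Fin.sum_univ_three] using hx
    rw [← map_eval, eval_surfForm]
    refine (congrArg _ ?_).trans (map_zero _)
    change x 0 ^ 3 + x 1 ^ 3 + x 2 * (x 2 ^ 2 + M * 0 ^ 2) = 0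
    linear_combination hsum
  refine ⟨⟨Projectivization.mk _ _ hv,
    mk_mem_zeroSet ((surfForm_isHomogeneous M).map _) hv heval⟩, Subtype.ext ?_⟩
  rw [(hφ _ v hv rfl ⟨_, hunit⟩).1 hred0]
  simp only [hred, Projectivization.mk_rep]

variable {P : Fin 3 → zeroSet (MvPolynomial.map (algebraMap ℤ_[p] ℚ_[p]) (surfForm M))}
  {a b : Fin 4 → ℤ_[p]} {i j : Fin 4} {c : ℤ_[p]} {l m : Fin 3 → ℤ_[p]}

lemma IntegralLineParam.phiSpec (h : IntegralLineParam (surfForm M) (fun k => (P k).1) a b c l m)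
    (hab : IsEchelonPair a b i j) (hφ : PhiSpec p _ φ) (k : Fin 3) :
    (∀ hne : redVec p (l k • a + m k • b) ≠ 0,
      (φ (P k)).1 = Projectivization.mk (ZMod p) _ hne) ∧
    (redVec p (l k • a + m k • b) = 0 → φ (P k) = OPt p) := by
  obtain ⟨hv, hP⟩ := h.mk_eq k
  obtain ⟨h₁, h₂⟩ := hφ (P k) _ hv hP (hab.exists_isUnit (h.isUnit_or_isUnit k))
  exact ⟨h₁, fun h0 => Subtype.ext (h₂ h0)⟩

lemma IntegralLineParam.tripleRel_of_redVec_ne_zero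
    (h : IntegralLineParam (surfForm M) (fun k => (P k).1) a b c l m)
    (hab : IsEchelonPair a b i j) (hi : i ≠ 3) (hM : PadicInt.toZMod M = 0)
    (hφ : PhiSpec p _ φ) (hb : redVec p b ≠ 0) :
    TripleRel (Gcubic p) (φ (P 0)) (φ (P 1)) (φ (P 2)) := by
  obtain ⟨i', hi'⟩ := exists_redVec_eq_of_ne (p := p) hi
  have hind : LinearIndependent (ZMod p) ![redVec p a, redVec p b] :=
    linearIndependent_pair_of_apply (i := i') (by simp [hi', hab.left_i])
      (by simp [hi', hab.right_i]) hb
  refine LineParam.tripleRel (P := φ ∘ P) (c := PadicInt.toZMod c) (l := PadicInt.toZMod ∘ l)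
    (m := PadicInt.toZMod ∘ m) hind ⟨?_, fun k => ?_⟩
  · rw [← map_toZMod_lineForm_surfForm hM, h.lineForm_eq, map_mul, map_C, map_lineFactors]
  · have hne : PadicInt.toZMod (l k) • redVec p a + PadicInt.toZMod (m k) • redVec p b ≠ 0 := by
      intro h0
      have hzero := LinearIndependent.pair_iff.mp hind _ _ h0
      rw [toZMod_eq_zero_iff_not_isUnit, toZMod_eq_zero_iff_not_isUnit, ← not_or] at hzero
      exact hzero (h.isUnit_or_isUnit k)
    have hφk := (h.phiSpec hab hφ k).1
    simp only [redVec_smul_add_smul] at hφk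
    exact ⟨hne, (hφk hne).symm⟩

lemma IntegralLineParam.eq_OPt_of_toZMod_eq_zero
    (h : IntegralLineParam (surfForm M) (fun k => (P k).1) a b c l m)
    (hab : IsEchelonPair a b i j) (hφ : PhiSpec p _ φ) (hb : redVec p b = 0) {k : Fin 3}
    (hk : PadicInt.toZMod (l k) = 0) : φ (P k) = OPt p :=
  (h.phiSpec hab hφ k).2 (by rw [redVec_smul_add_smul, hk, hb, zero_smul, smul_zero, add_zero])

lemma IntegralLineParam.mk_redVec_eq_of_toZMod_ne_zero
    (h : IntegralLineParam (surfForm M) (fun k => (P k).1) a b c l m)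
    (hab : IsEchelonPair a b i j) (hφ : PhiSpec p _ φ) (hb : redVec p b = 0)
    (ha : redVec p a ≠ 0) {k : Fin 3} (hk : PadicInt.toZMod (l k) ≠ 0) :
    Projectivization.mk (ZMod p) _ ha = (φ (P k)).1 := by
  have hred : redVec p (l k • a + m k • b) = PadicInt.toZMod (l k) • redVec p a := by
    rw [redVec_smul_add_smul, hb, smul_zero, add_zero]
  rw [(h.phiSpec hab hφ k).1 (hred ▸ smul_ne_zero hk ha), eq_comm,
    Projectivization.mk_eq_mk_iff']
  exact ⟨_, hred.symm⟩

lemma IntegralLineParam.sum_pic0Class_of_redVec_eq_zero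
    (h : IntegralLineParam (surfForm M) (fun k => (P k).1) a b c l m)
    (hab : IsEchelonPair a b i j) (hi : i ≠ 3) (hM : Irreducible M)
    (hφ : PhiSpec p _ φ) (hb : redVec p b = 0) : ∑ k, pic0Class p (φ (P k)) = 0 := by
  obtain ⟨i', hi'⟩ := exists_redVec_eq_of_ne (p := p) hi
  have ha : redVec p a ≠ 0 := Function.ne_iff.mpr ⟨i', by simp [hi', hab.left_i]⟩
  obtain rfl : j = 3 := by
    by_contra hj
    obtain ⟨j', hj'⟩ := exists_redVec_eq_of_ne (p := p) hj
    simpa [hj', hab.right_j] using congrFun hb j'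
  have hzero (k) (hk : PadicInt.toZMod (l k) = 0) : pic0Class p (φ (P k)) = 0 := by
    rw [h.eq_OPt_of_toZMod_eq_zero hab hφ hb hk, pic0Class_OPt]
  have hmk (k) (hk : PadicInt.toZMod (l k) ≠ 0) :=
    h.mk_redVec_eq_of_toZMod_ne_zero hab hφ hb ha hk
  by_cases hl : ∃ k, PadicInt.toZMod (l k) ≠ 0
  swap
  · push Not at hl
    exact Finset.sum_eq_zero fun k _ => hzero k (hl k)
  by_cases ha2 : redVec p a 2 = 0
  · refine Finset.sum_eq_zero fun k _ => ?_
    by_cases hk : PadicInt.toZMod (l k) = 0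
    exacts [hzero k hk, pic0Class_flex ha ha2 (hmk k hk)]
  obtain ⟨k₀, hk₀, huniq⟩ := existsUnique_map_eq_zero hM.ne_zero (toZMod_eq_zero_iff_dvd hM)
    h.lineForm_eq hab.left_j hab.right_j ha2 (congrFun hb)
    (by simpa only [toZMod_ne_zero_iff_isUnit] using h.isUnit_or_isUnit) hl
  obtain ⟨k₁, hk₁⟩ := hl
  have hconst (k) (hk : k ≠ k₀) : pic0Class p (φ (P k)) = pic0Class p (φ (P k₁)) :=
    congrArg _ (Subtype.ext ((hmk k fun h0 => hk (huniq k h0)).symm.trans (hmk k₁ hk₁)))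
  rw [← Finset.add_sum_erase _ _ (Finset.mem_univ k₀), hzero k₀ hk₀, zero_add,
    Finset.sum_congr rfl fun k hk => hconst k (Finset.ne_of_mem_erase hk), Finset.sum_const,
    Finset.card_erase_of_mem (Finset.mem_univ k₀), Finset.card_fin, two_nsmul, pic0Class_add_self]

lemma PhiSpec.pic0Class_add_add_eq_zero (hφ : PhiSpec p _ φ) (hM : Irreducible M)
    {P Q R : zeroSet (MvPolynomial.map (algebraMap ℤ_[p] ℚ_[p]) (surfForm M))}
    (h : TripleRel _ P Q R) : pic0Class p (φ P) + pic0Class p (φ Q) + pic0Class p (φ R) = 0 := by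
  obtain ⟨u, v, hind, c, l, m, hline⟩ := h.exists_lineParam
  obtain ⟨a, b, i, j, hi, hab, α, β, γ, δ, hdet, ha, hb⟩ := exists_isEchelonPair_ne ℤ_[p] hind 3
  have hline' := hline.linearCombination hdet
  rw [← ha, ← hb] at hline'
  obtain ⟨c, l, m, hint⟩ := hline'.exists_integral
  by_cases hb0 : redVec p b = 0
  · simpa [Fin.sum_univ_three] using hint.sum_pic0Class_of_redVec_eq_zero hab hi hM hφ hb0
  · exact CubicSurf.pic0Class_add_add_eq_zero <| hint.tripleRel_of_redVec_ne_zero hab hi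
      ((toZMod_eq_zero_iff_dvd hM M).mpr dvd_rfl) hφ hb0

lemma irreducible_intCast {M : ℤ} (hM : Squarefree M) (hpM : (p : ℤ) ∣ M) :
    Irreducible (M : ℤ_[p]) := by
  obtain ⟨N, rfl⟩ := hpM
  have hN : ¬(p : ℤ) ∣ N := fun h =>
    (Nat.prime_iff_prime_int.mp Fact.out).not_isUnit (hM p (mul_dvd_mul_left _ h))
  have hunit : IsUnit (N : ℤ_[p]) := by
    rw [← toZMod_ne_zero_iff_isUnit, map_intCast]
    rwa [Ne, ZMod.intCast_zmod_eq_zero_iff_dvd]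
  rw [Int.cast_mul, Int.cast_natCast, irreducible_mul_isUnit hunit]
  exact PadicInt.irreducible_p

end Reduction

end CubicSurf

open CubicSurf MvPolynomial in
theorem H_to_pic0_mod_two_SM_general
    (p : ℕ) [Fact p.Prime] (hp3 : p ≠ 3)
    (M : ℤ_[p]) (hM : Irreducible M)
    (F : MvPolynomial (Fin 4) ℚ_[p])
    (hFdef : F = X 0 ^ 3 + X 1 ^ 3 +
      X 2 * (X 2 ^ 2 + C ((M : ℚ_[p])) * X 3 ^ 2))
    (φ : zeroSet F → zeroSet (Gcubic p)) (hφ : PhiSpec p F φ) :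
    ∃ h : HS F →+ ModP 2 (Pic0C p),
      Function.Surjective h ∧
      ∀ P : zeroSet F,
        h (HClass F P) = QuotientAddGroup.mk (H0diff (Gcubic p) (φ P) (OPt p)) := by
  obtain rfl : F = MvPolynomial.map (algebraMap ℤ_[p] ℚ_[p]) (surfForm M) := by
    rw [hFdef, map_surfForm]
    rfl
  have hψ (P Q R) (h : TripleRel _ P Q R) :
      pic0Class p (φ P) + pic0Class p (φ Q) + pic0Class p (φ R) = 0 :=
    hφ.pic0Class_add_add_eq_zero hM h
  refine ⟨HS.lift (pic0Class p ∘ φ) hψ, HS.lift_surjective hψ ?_, HS.lift_HClass _ hψ⟩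
  rw [Set.range_comp', (hφ.surjective hp3).range_eq, Set.image_univ, closure_range_pic0Class]

open CubicSurf MvPolynomial in
/-- Let `M` be a non-zero squarefree integer, `p ≠ 3` a prime dividing
`M`, and `S : x³ + y³ + z(z² + M w²) = 0` over `ℚ_p`.  Let `C_p : x³ + y³ + z³ = 0` over
`F_p` and `O = (1:-1:0)`.  Let `φ : S(ℚ_p) → C_p(F_p)` be as specified (reduction of a
primitive coordinate vector, sending the points reducing to the vertex to `O`), and let
`ψ(P) = [φ(P) - O] ∈ Pic⁰(C_p)`.  Then `ψ` induces a well-defined surjective group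
homomorphism `H_S(ℚ_p) → Pic⁰(C_p)/2Pic⁰(C_p)` sending `[P]` to `ψ(P) mod 2Pic⁰(C_p)`. -/
theorem H_to_pic0_mod_two_SM
    (p : ℕ) [Fact p.Prime] (hp3 : p ≠ 3)
    (M : ℤ) (hM : Squarefree M) (hMne : M ≠ 0) (hpM : (p : ℤ) ∣ M)
    (F : MvPolynomial (Fin 4) ℚ_[p])
    (hFdef : F = X 0 ^ 3 + X 1 ^ 3 +
      X 2 * (X 2 ^ 2 + C ((M : ℚ_[p])) * X 3 ^ 2))
    (φ : zeroSet F → zeroSet (Gcubic p)) (hφ : PhiSpec p F φ) :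
    ∃ h : HS F →+ ModP 2 (Pic0C p),
      Function.Surjective h ∧
      ∀ P : zeroSet F,
        h (HClass F P) = QuotientAddGroup.mk (H0diff (Gcubic p) (φ P) (OPt p)) := by
  exact H_to_pic0_mod_two_SM_general p hp3 M (irreducible_intCast hM hpM) F
    (by simpa using hFdef) φ hφ
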